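/- The real number 2^√2 (the real power of 2 with exponent √2) is transcendental over ℚ. -/

import Mathlib

open Polynomial

theorem gs_rolle (f f' : ℝ → ℝ) (hf : ∀ x, HasDerivAt f (f' x) x) (Z : Finset ℝ)
    (hZ : ∀ z ∈ Z, f z = 0) :
    ∃ Z' : Finset ℝ, Z.card ≤ Z'.card + 1 ∧ ∀ z ∈ Z', f' z = 0 := by
  have h : ∀ x y : ℝ, ∃ c, (x ∈ Z ∧ y ∈ Z ∧ x < y) → (x < c ∧ c < y ∧ f' c = 0) := by
    intro x y
    by_cases hxy : x ∈ Z ∧ y ∈ Z ∧ x < y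
    · obtain ⟨c, hc, hc'⟩ := exists_hasDerivAt_eq_zero hxy.2.2
        (fun t _ => (hf t).continuousAt.continuousWithinAt)
        ((hZ x hxy.1).trans (hZ y hxy.2.1).symm) (fun t _ => hf t)
      exact ⟨c, fun _ => ⟨hc.1, hc.2, hc'⟩⟩
    · exact ⟨0, fun h => absurd h hxy⟩
  choose g hg using h
  refine ⟨((Z ×ˢ Z).filter (fun q => q.1 < q.2)).image (fun q => g q.1 q.2), ?_, ?_⟩
  · apply Finset.card_le_of_interleaved
    intro x hx y hy hxy _
    obtain ⟨h1, h2, h3⟩ := hg x y ⟨hx, hy, hxy⟩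
    refine ⟨g x y, ?_, h1, h2⟩
    rw [Finset.mem_image]
    exact ⟨(x, y), by simp [hx, hy, hxy], rfl⟩
  · intro z hz
    rw [Finset.mem_image] at hz
    obtain ⟨⟨x, y⟩, hq, rfl⟩ := hz
    simp only [Finset.mem_filter, Finset.mem_product] at hq
    exact (hg x y ⟨hq.1.1, hq.1.2, hq.2⟩).2.2

theorem gs_zero_estimate (N : ℕ) : ∀ (s : Finset ℕ) (d : ℕ → ℕ) (P : ℕ → ℝ[X]) (w : ℕ → ℝ)
    (_ : ∑ l ∈ s, d l = N) (_ : ∀ l ∈ s, (P l).degree < (d l : WithBot ℕ))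
    (_ : Set.InjOn w s) (Z : Finset ℝ) (_ : N ≤ Z.card)
    (_ : ∀ z ∈ Z, ∑ l ∈ s, (P l).eval z * Real.exp (w l * z) = 0), ∀ l ∈ s, P l = 0 := by
  induction N with
  | zero =>
    intro s d P w hd hP _ _ _ _ l hl
    have : d l = 0 := by
      rw [Finset.sum_eq_zero_iff] at hd
      exact hd l hl
    have h := hP l hl
    rw [this] at h
    simpa using h
  | succ N ih =>
    intro s d P w hd hP hw Z hN hZ
    obtain ⟨l0, hl0, hdl0⟩ : ∃ l ∈ s, d l ≠ 0 := by
      by_contra! h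
      rw [Finset.sum_eq_zero h] at hd
      omega
    have hZ1 : ∀ z ∈ Z, ∑ l ∈ s, (P l).eval z * Real.exp ((w l - w l0) * z) = 0 := by
      intro z hz
      have : ∑ l ∈ s, (P l).eval z * Real.exp ((w l - w l0) * z)
          = (∑ l ∈ s, (P l).eval z * Real.exp (w l * z)) * Real.exp (- w l0 * z) := by
        rw [Finset.sum_mul]
        refine Finset.sum_congr rfl fun l _ => ?_
        rw [mul_assoc, ← Real.exp_add]
        ring_nf
      rw [this, hZ z hz, zero_mul]
    let Q : ℕ → ℝ[X] := fun l => derivative (P l) + C (w l - w l0) * P l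
    have hder : ∀ x, HasDerivAt (fun x => ∑ l ∈ s, (P l).eval x * Real.exp ((w l - w l0) * x))
        (∑ l ∈ s, (Q l).eval x * Real.exp ((w l - w l0) * x)) x := by
      intro x
      refine HasDerivAt.fun_sum fun l _ => ?_
      have h1 := (P l).hasDerivAt x
      have h2 : HasDerivAt (fun x => Real.exp ((w l - w l0) * x))
          (Real.exp ((w l - w l0) * x) * ((w l - w l0) * 1)) x :=
        ((hasDerivAt_id x).const_mul (w l - w l0)).exp
      refine (h1.mul h2).congr_deriv ?_
      simp only [Q, eval_add, eval_mul, eval_C]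
      ring
    obtain ⟨Z', hZ'c, hZ'⟩ := gs_rolle _ _ hder Z hZ1
    have hQ := ih s (fun l => if l = l0 then d l0 - 1 else d l) Q (fun l => w l - w l0) (by
        rw [← Finset.add_sum_erase _ _ hl0] at hd ⊢
        rw [Finset.sum_congr rfl (g := fun x => d x) (fun x hx => by
          rw [if_neg (Finset.ne_of_mem_erase hx)])]
        simp only [if_true]
        omega) (by
        intro l hl
        have hPl := hP l hl
        by_cases h : l = l0
        · subst h
          simp only [Q, sub_self, map_zero, zero_mul, add_zero, if_true]
          by_cases h0 : P l = 0
          · rw [h0]; simp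
          · have h2 := degree_derivative_lt h0
            by_cases h3 : derivative (P l) = 0
            · rw [h3]; simp
            rw [degree_eq_natDegree h0] at hPl h2
            rw [degree_eq_natDegree h3] at h2 ⊢
            norm_cast at hPl h2 ⊢
            omega
        · simp only [if_neg h, Q]
          refine (degree_add_le _ _).trans_lt (max_lt ?_ ?_)
          · exact (degree_derivative_le).trans_lt hPl
          · refine lt_of_le_of_lt ?_ hPl
            rw [degree_C_mul (sub_ne_zero.mpr fun h' => h (hw hl hl0 h'))]) (by
        intro a ha b hb hab
        exact hw ha hb (by simpa using hab)) Z' (by omega) hZ'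
    have hne : ∀ l ∈ s, l ≠ l0 → P l = 0 := by
      intro l hl hll
      by_contra h0
      have h1 := hQ l hl
      have h2 : w l - w l0 ≠ 0 := sub_ne_zero.mpr fun h => hll (hw hl hl0 h)
      have h3 := degree_derivative_lt h0
      have h4 : derivative (P l) = - (C (w l - w l0) * P l) := eq_neg_of_add_eq_zero_left h1
      rw [h4, degree_neg, degree_C_mul h2] at h3
      exact lt_irrefl _ h3
    have hP0 : P l0 = 0 := by
      have h1 := hQ l0 hl0
      simp only [Q, sub_self, map_zero, zero_mul, add_zero] at h1
      have h2 := derivative_eq_zero.mp h1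
      obtain ⟨z, hz⟩ : Z.Nonempty := Finset.card_pos.mp (by omega)
      have h3 := hZ1 z hz
      rw [Finset.sum_eq_single_of_mem l0 hl0 (fun l hl hll => by rw [hne l hl hll]; simp)] at h3
      rw [eq_C_of_natDegree_eq_zero h2] at h3 ⊢
      simpa using h3
    intro l hl
    by_cases h : l = l0
    · rw [h, hP0]
    · exact hne l hl h

theorem gs_sum_inj {ι : Type*} [Fintype ι] [DecidableEq ι] (n : ι → ℕ)
    (hn : Function.Injective n) :
    ∑ i ∈ Finset.range (Fintype.card ι), i ≤ ∑ i, n i := by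
  have h := Finset.sum_range_le_sum (s := Finset.univ.image (fun i => (n i : ℤ))) (c := 0)
    (by simp)
  have hinj : Function.Injective (fun i => (n i : ℤ)) := fun a b h => hn (by simpa using h)
  rw [Finset.card_image_of_injective _ hinj, Finset.sum_image (fun a _ b _ h => hinj h)] at h
  simp only [zero_add, Finset.card_univ] at h
  rw [← Nat.cast_le (α := ℤ)]
  push_cast
  exact h

theorem gs_det_poly {ι : Type*} [Fintype ι] [DecidableEq ι] (p : ι → ℕ → ℝ)
    (hp : ∀ i n, 0 ≤ p i n) (N : ℕ) (x : ι → ℝ) (X : ℝ) (hX : ∀ j, |x j| ≤ X) (hX0 : 0 ≤ X) :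
    |(Matrix.of fun i j => ∑ n ∈ Finset.range N, p i n * x j ^ n : Matrix ι ι ℝ).det| ≤
      (Fintype.card ι).factorial * (2 ^ (∑ i ∈ Finset.range (Fintype.card ι), i))⁻¹ *
        ∏ i, ∑ n ∈ Finset.range N, p i n * (2 * X) ^ n := by
  have h1 : (Matrix.of fun i j => ∑ n ∈ Finset.range N, p i n * x j ^ n : Matrix ι ι ℝ).det
      = ∑ r ∈ Fintype.piFinset (fun _ : ι => Finset.range N),
        (∏ i, p i (r i)) * (Matrix.of fun i j => x j ^ (r i) : Matrix ι ι ℝ).det := by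
    have h2 := (Matrix.detRowAlternating (n := ι) (R := ℝ)).toMultilinearMap.map_sum_finset
      (fun i n => (fun j => p i n * x j ^ n)) (fun _ => Finset.range N)
    have h3 : (fun i => ∑ n ∈ Finset.range N, (fun j => p i n * x j ^ n)) =
      (fun i j => ∑ n ∈ Finset.range N, p i n * x j ^ n) := by
      ext i j; simp
    rw [h3] at h2
    refine h2.trans (Finset.sum_congr rfl fun r _ => ?_)
    have h4 := Matrix.det_mul_column (fun i => p i (r i))
      (Matrix.of fun i j => x j ^ (r i) : Matrix ι ι ℝ)
    exact h4
  rw [h1, Finset.prod_univ_sum, Finset.mul_sum]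
  refine (Finset.abs_sum_le_sum_abs _ _).trans (Finset.sum_le_sum fun r _ => ?_)
  have hpr : 0 ≤ ∏ i, p i (r i) := Finset.prod_nonneg fun i _ => hp _ _
  rw [abs_mul, abs_of_nonneg hpr, Finset.prod_mul_distrib, mul_left_comm]
  refine mul_le_mul_of_nonneg_left ?_ hpr
  by_cases hr : Function.Injective r
  · have h5 : |(Matrix.of fun i j => x j ^ (r i) : Matrix ι ι ℝ).det| ≤
        (Fintype.card ι).factorial * ∏ i, X ^ r i := by
      rw [← Matrix.det_transpose, Matrix.det_apply]
      refine (Finset.abs_sum_le_sum_abs _ _).trans ?_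
      refine (Finset.sum_le_card_nsmul _ _ (∏ i, X ^ r i) fun σ _ => ?_).trans ?_
      · have : |((Equiv.Perm.sign σ : ℤ) : ℝ)| = 1 := by
          rcases Int.units_eq_one_or (Equiv.Perm.sign σ) with h | h <;> simp [h]
        rw [Units.smul_def, zsmul_eq_mul, abs_mul, this, one_mul, Finset.abs_prod]
        refine Finset.prod_le_prod (fun _ _ => abs_nonneg _) fun i _ => ?_
        simp only [Matrix.transpose_apply, Matrix.of_apply, abs_pow]
        exact pow_le_pow_left₀ (abs_nonneg _) (hX _) _
      · rw [Finset.card_univ, Fintype.card_perm, nsmul_eq_mul]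
    refine h5.trans ?_
    rw [mul_assoc]
    refine mul_le_mul_of_nonneg_left ?_ (by positivity)
    simp_rw [mul_pow]
    rw [Finset.prod_mul_distrib, ← mul_assoc]
    refine le_mul_of_one_le_left (by positivity) ?_
    rw [inv_mul_eq_div, one_le_div (by positivity), Finset.prod_pow_eq_pow_sum]
    exact pow_le_pow_right₀ (by norm_num : (1 : ℝ) ≤ 2) (gs_sum_inj r hr)
  · have : (Matrix.of fun i j => x j ^ (r i) : Matrix ι ι ℝ).det = 0 := by
      simp only [Function.Injective, not_forall] at hr
      obtain ⟨a, b, hab, hne⟩ := hr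
      exact Matrix.det_zero_of_row_eq hne (by ext j; simp [hab])
    rw [this, abs_zero]
    positivity

theorem gs_det_exp {ι : Type*} [Fintype ι] [DecidableEq ι] (k : ι → ℕ) (w : ι → ℝ)
    (hw : ∀ i, 0 ≤ w i) (x : ι → ℝ) (X : ℝ) (hX : ∀ j, |x j| ≤ X) (hX0 : 0 ≤ X) :
    |(Matrix.of fun i j => x j ^ (k i) * Real.exp (w i * x j) : Matrix ι ι ℝ).det| ≤
      (Fintype.card ι).factorial * (2 ^ (∑ i ∈ Finset.range (Fintype.card ι), i))⁻¹ *
        ∏ i, ((2 * X) ^ (k i) * Real.exp (w i * (2 * X))) := by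
  let p : ι → ℕ → ℝ := fun i n => if k i ≤ n then w i ^ (n - k i) / (n - k i).factorial else 0
  have hp : ∀ i n, 0 ≤ p i n := by
    intro i n
    have := hw i
    simp only [p]
    split_ifs <;> positivity
  have hs : ∀ i y, HasSum (fun n => p i n * y ^ n) (y ^ (k i) * Real.exp (w i * y)) := by
    intro i y
    have h1 : HasSum (fun n => y ^ (k i) * ((w i * y) ^ n / n.factorial))
        (y ^ (k i) * Real.exp (w i * y)) := by
      refine HasSum.mul_left _ ?_
      rw [Real.exp_eq_exp_ℝ]
      exact NormedSpace.expSeries_div_hasSum_exp (w i * y)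
    have hinj : Function.Injective (fun n : ℕ => n + k i) := add_left_injective _
    have h2 := (hinj.hasSum_iff (f := fun n => p i n * y ^ n)
      (a := y ^ (k i) * Real.exp (w i * y)) ?_).mp ?_
    · exact h2
    · intro n hn
      have : ¬ k i ≤ n := fun h => hn ⟨n - k i, by simp [h]⟩
      simp [p, this]
    · convert h1 using 1
      ext n
      simp only [p, Function.comp, Nat.le_add_left, if_true, Nat.add_sub_cancel]
      rw [mul_pow, pow_add]
      ring
  have hlim : Filter.Tendsto (fun N : ℕ =>
      |(Matrix.of fun i j => ∑ n ∈ Finset.range N, p i n * x j ^ n : Matrix ι ι ℝ).det|)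
      Filter.atTop (nhds
      |(Matrix.of fun i j => x j ^ (k i) * Real.exp (w i * x j) : Matrix ι ι ℝ).det|) := by
    have hc : Continuous fun A : Matrix ι ι ℝ => |A.det| := (continuous_id.matrix_det).abs
    refine (hc.tendsto _).comp ?_
    refine tendsto_pi_nhds.mpr fun i => tendsto_pi_nhds.mpr fun j => ?_
    exact (hs i (x j)).tendsto_sum_nat
  refine le_of_tendsto' hlim fun N => ?_
  refine (gs_det_poly p hp N x X hX hX0).trans ?_
  refine mul_le_mul_of_nonneg_left ?_ (by positivity)
  refine Finset.prod_le_prod (fun i _ => Finset.sum_nonneg fun n _ => ?_) fun i _ => ?_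
  · exact mul_nonneg (hp _ _) (by positivity)
  · exact sum_le_hasSum _ (fun n _ => mul_nonneg (hp _ _) (by positivity)) (hs i (2 * X))

open NumberField in
theorem gs_arith {K : Type*} [Field K] [NumberField K] {ι : Type*} [Fintype ι] [DecidableEq ι]
    (M : Matrix ι ι K) (hM : ∀ i j, IsIntegral ℤ (M i j)) (hdet : M.det ≠ 0) (φ : K →+* ℂ)
    (B : ℝ) (hB1 : 1 ≤ B) (hB : ∀ (σ : K →+* ℂ) i j, ‖σ (M i j)‖ ≤ B) :
    1 ≤ ‖φ M.det‖ *
      ((Fintype.card ι).factorial * B ^ Fintype.card ι) ^ (Module.finrank ℚ K) := by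
  have hint : IsIntegral ℤ M.det := by
    rw [Matrix.det_apply]
    refine IsIntegral.sum _ fun σ _ => ?_
    rw [Units.smul_def]
    exact (IsIntegral.prod _ fun i _ => hM _ _).smul _
  have h1 : (1 : ℝ) ≤ ‖Algebra.norm ℚ M.det‖ := by
    have h2 : IsIntegral ℤ (Algebra.norm ℚ M.det) := Algebra.isIntegral_norm ℚ hint
    obtain ⟨z, hz⟩ := IsIntegrallyClosed.isIntegral_iff.mp h2
    have h3 : Algebra.norm ℚ M.det ≠ 0 := Algebra.norm_ne_zero_iff.mpr hdet
    rw [← hz] at h3 ⊢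
    have hz0 : z ≠ 0 := by rintro rfl; simp at h3
    have := Int.one_le_abs hz0
    simp only [eq_intCast]
    rw [← Rat.norm_cast_real, Real.norm_eq_abs]
    push_cast
    exact_mod_cast this
  have hhouse : house M.det ≤ (Fintype.card ι).factorial * B ^ Fintype.card ι := by
    rw [house, pi_norm_le_iff_of_nonneg (by positivity)]
    intro σ
    have h4 := Matrix.det_le (A := M.map σ) (abv := IsAbsoluteValue.toAbsoluteValue (norm : ℂ → ℝ))
      (x := B) (fun i j => hB σ i j)
    rw [nsmul_eq_mul] at h4
    have h5 : (M.map σ).det = σ M.det := (RingHom.map_det σ M).symm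
    rw [h5] at h4
    exact h4
  have hge : (1 : ℝ) ≤ (Fintype.card ι).factorial * B ^ Fintype.card ι :=
    one_le_mul_of_one_le_of_one_le (by exact_mod_cast Nat.factorial_pos _) (one_le_pow₀ hB1)
  calc (1 : ℝ) ≤ _ := h1
    _ ≤ _ := norm_norm_le_norm_mul_house_pow M.det φ
    _ ≤ _ := by
      refine mul_le_mul_of_nonneg_left ?_ (norm_nonneg _)
      refine (pow_le_pow_left₀ (house_nonneg _) hhouse _).trans ?_
      exact pow_le_pow_right₀ hge (Nat.sub_le _ _)

theorem gs_asymp (C : ℝ) (hC : 1 ≤ C) (E : ℕ) :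
    ∃ m : ℕ, 1 ≤ m ∧ (C * (m : ℝ) ^ 2) ^ (E * m ^ 3 * m ^ 4 * 2) < 2 ^ (m ^ 4 * (m ^ 4 - 1)) := by
  have h1 := Real.isLittleO_log_id_atTop.comp_tendsto tendsto_natCast_atTop_atTop
  have hε : (0 : ℝ) < 1 / (24 * (E + 1)) := by positivity
  have h2 := (Asymptotics.isLittleO_iff.mp h1) hε
  obtain ⟨m, hm, hmC, hm2⟩ := (h2.and ((Filter.eventually_ge_atTop ⌈C⌉₊).and
    (Filter.eventually_ge_atTop 2))).exists
  have hCm : C ≤ m := (Nat.le_ceil C).trans (by exact_mod_cast hmC)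
  have hm0 : (2 : ℝ) ≤ m := by exact_mod_cast hm2
  refine ⟨m, by omega, ?_⟩
  simp only [Function.comp, id, Real.norm_eq_abs] at hm
  have hlog : Real.log m ≤ 1 / (24 * (E + 1)) * m := by
    refine (le_abs_self _).trans (hm.trans_eq ?_)
    rw [abs_of_nonneg (by positivity)]
  have h3 : C * (m : ℝ) ^ 2 ≤ (m : ℝ) ^ 3 := by
    rw [pow_succ' (m : ℝ) 2]; gcongr
  have key : (C * (m : ℝ) ^ 2) ^ (E * m ^ 3 * 2) < 2 ^ (m ^ 4 - 1) := by
    refine (pow_le_pow_left₀ (by positivity) h3 _).trans_lt ?_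
    rw [← Real.log_lt_log_iff (by positivity) (by positivity), Real.log_pow, Real.log_pow,
      Real.log_pow, Nat.cast_sub (Nat.one_le_pow _ _ (by omega))]
    push_cast
    have hl2 := Real.log_two_gt_d9
    have hm4 : (16 : ℝ) ≤ (m : ℝ) ^ 4 := by
      calc (16 : ℝ) = 2 ^ 4 := by norm_num
        _ ≤ _ := by gcongr
    have h5 : (E * (m : ℝ) ^ 3 * 2) * (3 * Real.log m) ≤ (m : ℝ) ^ 4 / 4 := by
      calc (E * (m : ℝ) ^ 3 * 2) * (3 * Real.log m)
          ≤ (E * (m : ℝ) ^ 3 * 2) * (3 * (1 / (24 * (E + 1)) * m)) := by gcongr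
        _ = (m : ℝ) ^ 4 / 4 * (E / (E + 1)) := by field_simp; ring
        _ ≤ (m : ℝ) ^ 4 / 4 * 1 := by
          gcongr
          rw [div_le_one (by positivity)]; linarith
        _ = _ := by ring
    nlinarith
  have h6 : E * m ^ 3 * m ^ 4 * 2 = (E * m ^ 3 * 2) * m ^ 4 := by ring
  rw [h6, pow_mul _ (E * m ^ 3 * 2) (m ^ 4), mul_comm (m ^ 4) (m ^ 4 - 1),
    pow_mul _ (m ^ 4 - 1) (m ^ 4)]
  exact pow_lt_pow_left₀ key (by positivity) (by positivity)

theorem gs_det_ne_zero {ι : Type*} [Fintype ι] [DecidableEq ι] (k l : ι → ℕ) (K0 L0 : ℕ)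
    (hkl : ∀ i j, k i = k j → l i = l j → i = j) (hk : ∀ i, k i < K0) (hl : ∀ i, l i < L0)
    (hcard : Fintype.card ι = L0 * K0) (x : ι → ℝ) (hx : Function.Injective x)
    (c : ℝ) (hc : c ≠ 0) :
    (Matrix.of fun i j => x j ^ (k i) * Real.exp ((l i * c) * x j) : Matrix ι ι ℝ).det ≠ 0 := by
  intro hdet
  obtain ⟨v, hv, hvM⟩ := Matrix.exists_vecMul_eq_zero_iff.mpr hdet
  apply hv
  let P : ℕ → ℝ[X] := fun n => ∑ i, if l i = n then C (v i) * X ^ (k i) else 0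
  have hP := gs_zero_estimate (L0 * K0) (Finset.range L0) (fun _ => K0) P (fun n => n * c)
    (by simp) (by
      intro n _
      refine (degree_sum_le _ _).trans_lt ?_
      rw [Finset.sup_lt_iff (by exact WithBot.bot_lt_coe _)]
      intro i _
      split_ifs
      · refine (degree_C_mul_X_pow_le _ _).trans_lt ?_
        exact_mod_cast hk i
      · rw [degree_zero]; exact WithBot.bot_lt_coe _) (by
      intro a _ b _ hab
      have := mul_right_cancel₀ hc hab
      exact_mod_cast this) (Finset.univ.image x) (by
      rw [Finset.card_image_of_injective _ hx, Finset.card_univ, hcard]) (by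
      intro z hz
      rw [Finset.mem_image] at hz
      obtain ⟨j, _, rfl⟩ := hz
      have h1 := congrFun hvM j
      simp only [Matrix.vecMul, dotProduct, Matrix.of_apply, Pi.zero_apply] at h1
      rw [← h1]
      simp only [P, eval_finsetSum, Finset.sum_mul]
      rw [Finset.sum_comm]
      refine Finset.sum_congr rfl fun i _ => ?_
      rw [Finset.sum_eq_single_of_mem (l i) (Finset.mem_range.mpr (hl i))]
      · simp [mul_assoc]
      · intro n _ hn
        rw [if_neg (Ne.symm hn)]
        simp)
  ext i
  have h2 := congrArg (fun p => coeff p (k i)) (hP (l i) (Finset.mem_range.mpr (hl i)))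
  simp only [P, finsetSum_coeff, coeff_zero] at h2
  rw [Finset.sum_eq_single i] at h2
  · simpa using h2
  · intro j _ hj
    split_ifs with h
    · rw [coeff_C_mul_X_pow, if_neg]
      intro h'
      exact hj (hkl j i h'.symm h)
    · simp
  · simp

open NumberField in
theorem gs_main {K : Type*} [Field K] [NumberField K] (ψ : K →+* ℝ) (s a : K)
    (hs : ψ s = Real.sqrt 2) (ha : ψ a = (2 : ℝ) ^ Real.sqrt 2) : False := by
  have hs2 : s ^ 2 = 2 := by
    apply ψ.injective
    rw [map_pow, hs, Real.sq_sqrt (by norm_num), map_ofNat]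
  have hsint : IsIntegral ℤ s := by
    refine IsIntegral.of_pow (n := 2) (by norm_num) ?_
    rw [hs2]
    simpa using isIntegral_algebraMap (R := ℤ) (A := K) (x := (2 : ℤ))
  have haalg : IsAlgebraic ℤ a :=
    (IsFractionRing.isAlgebraic_iff ℤ ℚ K).mpr (Algebra.IsAlgebraic.isAlgebraic a)
  obtain ⟨y, hy0, hy⟩ := haalg.exists_integral_multiple
  rw [zsmul_eq_mul] at hy
  set Y : ℝ := |(y : ℝ)| with hY
  have hY1 : 1 ≤ Y := by
    rw [hY]; exact_mod_cast Int.one_le_abs hy0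
  set A : ℝ := max 1 (house a) with hA
  have hA1 : 1 ≤ A := le_max_left _ _
  have hAσ : ∀ σ : K →+* ℂ, ‖σ a‖ ≤ A := fun σ =>
    (norm_embedding_le_house a σ).trans (le_max_right _ _)
  set D := Module.finrank ℚ K
  set C : ℝ := 384 * Y * A with hC
  have hYA : 1 ≤ Y * A := one_le_mul_of_one_le_of_one_le hY1 hA1
  have hC1 : 1 ≤ C := by rw [hC]; nlinarith
  obtain ⟨m, hm1, hm⟩ := gs_asymp C hC1 (3 * (D + 1))
  have hmR : (1 : ℝ) ≤ m := by exact_mod_cast hm1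
  have hm2R : (1 : ℝ) ≤ (m : ℝ) ^ 2 := one_le_pow₀ hmR
  let ι := Fin (m ^ 2) × Fin (m ^ 2)
  have hcard : Fintype.card ι = m ^ 4 := by
    simp only [ι, Fintype.card_prod, Fintype.card_fin]; ring
  let e : ι ≃ Fin (m ^ 3) × Fin m := Fintype.equivOfCardEq (by
    rw [hcard]; simp only [Fintype.card_prod, Fintype.card_fin]; ring)
  let k : ι → ℕ := fun i => (e i).1
  let l : ι → ℕ := fun i => (e i).2
  let x : ι → ℝ := fun j => ((j.1 : ℕ) : ℝ) + ((j.2 : ℕ) : ℝ) * Real.sqrt 2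
  have hk : ∀ i, k i < m ^ 3 := fun i => (e i).1.2
  have hl : ∀ i, l i < m := fun i => (e i).2.2
  have hkl : ∀ i j, k i = k j → l i = l j → i = j := fun i j h1 h2 =>
    e.injective (Prod.ext (Fin.ext h1) (Fin.ext h2))
  have hxinj : Function.Injective x := by
    rintro ⟨a1, b1⟩ ⟨a2, b2⟩ h
    simp only [x] at h
    have hb : (b1 : ℕ) = b2 := by
      by_contra hne
      have hne' : ((b1 : ℕ) : ℝ) - (b2 : ℕ) ≠ 0 := by
        rw [sub_ne_zero]; exact_mod_cast hne
      apply irrational_sqrt_two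
      refine ⟨(((a2 : ℕ) : ℚ) - (a1 : ℕ)) / (((b1 : ℕ) : ℚ) - (b2 : ℕ)), ?_⟩
      push_cast
      rw [div_eq_iff hne']
      linarith
    have ha' : (a1 : ℕ) = a2 := by
      rw [hb] at h
      exact_mod_cast add_right_cancel h
    exact Prod.ext (Fin.ext ha') (Fin.ext hb)
  have hsq2 : Real.sqrt 2 ≤ 2 := by
    rw [Real.sqrt_le_left (by norm_num)]; norm_num
  have hfin : ∀ j : Fin (m ^ 2), ((j : ℕ) : ℝ) ≤ (m : ℝ) ^ 2 := fun j => by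
    exact_mod_cast j.2.le
  have hxX : ∀ j, |x j| ≤ 3 * (m : ℝ) ^ 2 := by
    intro j
    have h1 := hfin j.1
    have h2 := hfin j.2
    rw [abs_of_nonneg (by positivity)]
    have h3 : ((j.2 : ℕ) : ℝ) * Real.sqrt 2 ≤ (m : ℝ) ^ 2 * 2 := by gcongr
    simp only [x]
    linarith
  have hlog2 : 0 < Real.log 2 := Real.log_pos (by norm_num)
  let N : Matrix ι ι ℝ := Matrix.of fun i j => x j ^ (k i) * Real.exp ((l i * Real.log 2) * x j)
  have hNne : N.det ≠ 0 := gs_det_ne_zero k l (m ^ 3) m hkl hk hl (by rw [hcard]; ring) x hxinj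
    (Real.log 2) hlog2.ne'
  let M0 : Matrix ι ι K := Matrix.of fun i j =>
    (((j.1 : ℕ) : K) + ((j.2 : ℕ) : K) * s) ^ (k i) *
      (2 ^ (l i * (j.1 : ℕ)) * a ^ (l i * (j.2 : ℕ)))
  let M : Matrix ι ι K := ((y : K) ^ (m ^ 3)) • M0
  have hψ : M0.map ψ = N := by
    ext i j
    simp only [M0, N, Matrix.map_apply, Matrix.of_apply, map_mul, map_pow, map_add, map_natCast,
      hs, ha, map_ofNat]
    congr 1
    rw [Real.rpow_def_of_pos (by norm_num), ← Real.exp_nat_mul]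
    nth_rewrite 1 [← Real.exp_log (show (0 : ℝ) < 2 by norm_num)]
    rw [← Real.exp_nat_mul, ← Real.exp_add]
    congr 1
    simp only [x]
    push_cast
    ring
  have hψdet : ψ M0.det = N.det := by
    rw [← hψ]; exact RingHom.map_det ψ M0
  have hMdet : M.det = ((y : K) ^ (m ^ 3)) ^ (m ^ 4) * M0.det := by
    simp only [M]
    rw [Matrix.det_smul, hcard]
  have hM0ne : M0.det ≠ 0 := by
    intro h; rw [h, map_zero] at hψdet; exact hNne hψdet.symm
  have hyK : (y : K) ≠ 0 := by exact_mod_cast hy0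
  have hMne : M.det ≠ 0 := by
    rw [hMdet]; exact mul_ne_zero (pow_ne_zero _ (pow_ne_zero _ hyK)) hM0ne
  have hlb : ∀ i (j : Fin (m ^ 2)), l i * (j : ℕ) ≤ m ^ 3 := fun i j => by
    calc l i * (j : ℕ) ≤ m * m ^ 2 := Nat.mul_le_mul (hl i).le j.2.le
      _ = m ^ 3 := by ring
  have hnat : ∀ n : ℕ, IsIntegral ℤ (n : K) := fun n => by
    simpa using isIntegral_algebraMap (R := ℤ) (A := K) (x := (n : ℤ))
  have hMint : ∀ i j, IsIntegral ℤ (M i j) := by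
    intro i j
    obtain ⟨t, ht⟩ := Nat.exists_eq_add_of_le (hlb i j.2)
    have hyi : IsIntegral ℤ (y : K) := by
      simpa using isIntegral_algebraMap (R := ℤ) (A := K) (x := y)
    have h2i : IsIntegral ℤ (2 : K) := by simpa using hnat 2
    have : M i j = (((j.1 : ℕ) : K) + ((j.2 : ℕ) : K) * s) ^ (k i) *
      (2 ^ (l i * (j.1 : ℕ)) * (((y : K) * a) ^ (l i * (j.2 : ℕ)) * (y : K) ^ t)) := by
      simp only [M, M0, Matrix.smul_apply, Matrix.of_apply, smul_eq_mul]
      rw [ht, pow_add, mul_pow]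
      ring
    rw [this]
    exact (((hnat _).add ((hnat _).mul hsint)).pow _).mul
      ((h2i.pow _).mul ((hy.pow _).mul (hyi.pow _)))
  set B : ℝ := (C * (m : ℝ) ^ 2) ^ (m ^ 3) with hBdef
  have hCm1 : 1 ≤ C * (m : ℝ) ^ 2 := one_le_mul_of_one_le_of_one_le hC1 hm2R
  have hB1 : 1 ≤ B := one_le_pow₀ hCm1
  have hB : ∀ (σ : K →+* ℂ) i j, ‖σ (M i j)‖ ≤ B := by
    intro σ i j
    have hσs : ‖σ s‖ ≤ 2 := by
      have h1 : ‖σ s‖ ^ 2 = 2 := by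
        rw [← norm_pow, ← map_pow, hs2, map_ofNat]; simp
      nlinarith [norm_nonneg (σ s)]
    have hlin : ‖((j.1 : ℕ) : ℂ) + ((j.2 : ℕ) : ℂ) * σ s‖ ≤ 3 * (m : ℝ) ^ 2 := by
      refine (norm_add_le _ _).trans ?_
      rw [norm_mul, Complex.norm_natCast, Complex.norm_natCast]
      have h1 := hfin j.1
      have h2 := hfin j.2
      have h3 : ((j.2 : ℕ) : ℝ) * ‖σ s‖ ≤ (m : ℝ) ^ 2 * 2 := by gcongr
      linarith
    simp only [M, M0, Matrix.smul_apply, Matrix.of_apply, smul_eq_mul, map_mul, map_pow, map_add,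
      map_natCast, map_intCast, map_ofNat, norm_mul, norm_pow]
    rw [Complex.norm_intCast, ← hY]
    have h2n : ‖(2 : ℂ)‖ = 2 := by simp
    rw [h2n]
    calc Y ^ m ^ 3 * (‖((j.1 : ℕ) : ℂ) + ((j.2 : ℕ) : ℂ) * σ s‖ ^ k i *
          (2 ^ (l i * (j.1 : ℕ)) * ‖σ a‖ ^ (l i * (j.2 : ℕ))))
        ≤ Y ^ m ^ 3 * ((3 * (m : ℝ) ^ 2) ^ m ^ 3 * (2 ^ m ^ 3 * A ^ m ^ 3)) := by
          gcongr ?_ * (?_ * (?_ * ?_))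
          · exact (pow_le_pow_left₀ (norm_nonneg _) hlin _).trans
              (pow_le_pow_right₀ (by linarith) (hk i).le)
          · exact pow_le_pow_right₀ (by norm_num) (hlb i j.1)
          · exact (pow_le_pow_left₀ (norm_nonneg _) (hAσ σ) _).trans
              (pow_le_pow_right₀ hA1 (hlb i j.2))
      _ = (6 * (Y * A) * (m : ℝ) ^ 2) ^ m ^ 3 := by
          simp only [← mul_pow]; congr 1; ring
      _ ≤ B := by
          rw [hBdef, hC]
          refine pow_le_pow_left₀ (by positivity) ?_ _
          rw [mul_assoc 384]
          gcongr
          norm_num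
  have harith := gs_arith M hMint hMne (Complex.ofRealHom.comp ψ) B hB1 hB
  rw [hcard] at harith
  set S := ∑ i ∈ Finset.range (m ^ 4), i with hS
  have hφ : ‖(Complex.ofRealHom.comp ψ) M.det‖ ≤
      (m ^ 4).factorial * (2 ^ S)⁻¹ * B ^ (m ^ 4) := by
    have h1 : ‖(Complex.ofRealHom.comp ψ) M.det‖ = (Y ^ (m ^ 3)) ^ (m ^ 4) * |N.det| := by
      rw [hMdet, RingHom.comp_apply, map_mul, map_pow, map_pow, map_intCast, hψdet]
      simp [hY]
    have h2 := gs_det_exp k (fun i => l i * Real.log 2) (fun i => by positivity) x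
      (3 * (m : ℝ) ^ 2) hxX (by positivity)
    rw [hcard] at h2
    have h3 : ∏ i, ((2 * (3 * (m : ℝ) ^ 2)) ^ (k i) *
        Real.exp (l i * Real.log 2 * (2 * (3 * (m : ℝ) ^ 2)))) ≤
        ((6 * (m : ℝ) ^ 2) ^ (m ^ 3) * 64 ^ (m ^ 3)) ^ (m ^ 4) := by
      rw [← hcard, ← Finset.card_univ, ← Finset.prod_const]
      refine Finset.prod_le_prod (fun i _ => by positivity) fun i _ => ?_
      have h4 : 2 * (3 * (m : ℝ) ^ 2) = 6 * (m : ℝ) ^ 2 := by ring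
      rw [h4]
      refine mul_le_mul ?_ ?_ (by positivity) (by positivity)
      · exact pow_le_pow_right₀ (by linarith) (hk i).le
      · have h5 : (64 : ℝ) ^ (m ^ 3) = Real.exp (m * Real.log 2 * (6 * (m : ℝ) ^ 2)) := by
          have : (64 : ℝ) = Real.exp (6 * Real.log 2) := by
            rw [show (6 : ℝ) * Real.log 2 = ((6 : ℕ) : ℝ) * Real.log 2 by norm_num,
              Real.exp_nat_mul, Real.exp_log (by norm_num)]
            norm_num
          rw [this, ← Real.exp_nat_mul]
          congr 1
          push_cast
          ring
        rw [h5]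
        apply Real.exp_le_exp.mpr
        have : (l i : ℝ) ≤ m := by exact_mod_cast (hl i).le
        gcongr
    rw [h1]
    calc (Y ^ (m ^ 3)) ^ (m ^ 4) * |N.det|
        ≤ (Y ^ (m ^ 3)) ^ (m ^ 4) * ((m ^ 4).factorial * (2 ^ S)⁻¹ *
          ((6 * (m : ℝ) ^ 2) ^ (m ^ 3) * 64 ^ (m ^ 3)) ^ (m ^ 4)) := by
          refine mul_le_mul_of_nonneg_left (h2.trans ?_) (by positivity)
          exact mul_le_mul_of_nonneg_left h3 (by positivity)
      _ = (m ^ 4).factorial * (2 ^ S)⁻¹ * ((384 * Y * (m : ℝ) ^ 2) ^ (m ^ 3)) ^ (m ^ 4) := by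
          have : (384 * Y * (m : ℝ) ^ 2) ^ (m ^ 3) =
              Y ^ (m ^ 3) * ((6 * (m : ℝ) ^ 2) ^ (m ^ 3) * 64 ^ (m ^ 3)) := by
            simp only [← mul_pow]; congr 1; ring
          rw [this, mul_pow (Y ^ (m ^ 3))]
          ring
      _ ≤ _ := by
          refine mul_le_mul_of_nonneg_left ?_ (by positivity)
          refine pow_le_pow_left₀ (by positivity) ?_ _
          rw [hBdef]
          refine pow_le_pow_left₀ (by positivity) ?_ _
          rw [hC]
          refine mul_le_mul_of_nonneg_right ?_ (by positivity)
          exact le_mul_of_one_le_right (by positivity) hA1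
  set G : ℝ := B ^ (m ^ 4) with hG
  have hfact : ((m ^ 4).factorial : ℝ) ≤ G ^ 2 := by
    calc ((m ^ 4).factorial : ℝ) ≤ ((m : ℝ) ^ 4) ^ (m ^ 4) := by
          exact_mod_cast Nat.factorial_le_pow (m ^ 4)
      _ ≤ (B ^ 2) ^ (m ^ 4) := by
          refine pow_le_pow_left₀ (by positivity) ?_ _
          have : (m : ℝ) ^ 2 ≤ B := by
            calc (m : ℝ) ^ 2 ≤ C * (m : ℝ) ^ 2 := le_mul_of_one_le_left (by positivity) hC1
              _ ≤ B := le_self_pow₀ hCm1 (by positivity)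
          calc (m : ℝ) ^ 4 = ((m : ℝ) ^ 2) ^ 2 := by ring
            _ ≤ B ^ 2 := pow_le_pow_left₀ (by positivity) this _
      _ = G ^ 2 := pow_right_comm _ _ _
  have hG0 : 0 < G := by positivity
  have hfinal : (2 : ℝ) ^ S ≤ G ^ (3 * (D + 1)) := by
    have h1 : (1 : ℝ) ≤ (G ^ 2 * (2 ^ S)⁻¹ * G) * (G ^ 2 * G) ^ D := by
      refine harith.trans ?_
      refine mul_le_mul (hφ.trans ?_) ?_ (by positivity) (by positivity)
      · gcongr
      · gcongr
    have h2 : (G ^ 2 * (2 ^ S)⁻¹ * G) * (G ^ 2 * G) ^ D = G ^ (3 * (D + 1)) / 2 ^ S := by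
      rw [pow_mul, pow_succ (G ^ 3) D]
      have : G ^ 2 * G = G ^ 3 := by ring
      rw [this]
      field_simp
    rw [h2, one_le_div (by positivity)] at h1
    exact h1
  have hsq : (2 : ℝ) ^ (m ^ 4 * (m ^ 4 - 1)) ≤
      (C * (m : ℝ) ^ 2) ^ (3 * (D + 1) * m ^ 3 * m ^ 4 * 2) := by
    rw [← Finset.sum_range_id_mul_two, ← hS, pow_mul]
    refine (pow_le_pow_left₀ (by positivity) hfinal 2).trans_eq ?_
    rw [hG, hBdef, ← pow_mul, ← pow_mul, ← pow_mul]
    congr 1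
    ring
  exact absurd hm (not_lt.mpr hsq)

/-- `2 ^ √2` (real power) is transcendental over `ℚ`. -/
theorem two_rpow_sqrt_two_transcendental :
    Transcendental ℚ ((2 : ℝ) ^ Real.sqrt 2) := by
  intro halg
  let T : Set ℝ := {Real.sqrt 2, (2 : ℝ) ^ Real.sqrt 2}
  let K := IntermediateField.adjoin ℚ T
  have hsqrt : IsIntegral ℚ (Real.sqrt 2) := by
    refine IsIntegral.of_pow (n := 2) (by norm_num) ?_
    rw [Real.sq_sqrt (by norm_num)]
    simpa using isIntegral_algebraMap (R := ℚ) (A := ℝ) (x := (2 : ℚ))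
  have : FiniteDimensional ℚ K := by
    have : Finite T := by simp only [T]; infer_instance
    refine IntermediateField.finiteDimensional_adjoin fun x hx => ?_
    simp only [T, Set.mem_insert_iff, Set.mem_singleton_iff] at hx
    rcases hx with rfl | rfl
    · exact hsqrt
    · exact halg.isIntegral
  have : NumberField K := { to_charZero := inferInstance, to_finiteDimensional := this }
  exact gs_main (K := K) (algebraMap K ℝ)
    ⟨Real.sqrt 2, IntermediateField.subset_adjoin ℚ T (by simp [T])⟩
    ⟨(2 : ℝ) ^ Real.sqrt 2, IntermediateField.subset_adjoin ℚ T (by simp [T])⟩ rfl rfl
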